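/- Let s ∈ (0,1], δ > 0, and let g(x) = s⁻¹·e^{s(x−1)} for x ≥ 1. Then sup_{x ≥ 1} (x + h_δ(x))/g(x) ≤ (1+δ)·exp(−(1+δ−s)/(1+δ)) ≤ 1 + δ. -/

import Mathlib

open MeasureTheory Set

/-- `G_δ(x) = (1/(1+δ))·(1 + δ·∫₁^x dt/g(t))` (normalized so that `∫₁^∞ dt/g(t) = 1`). -/
noncomputable def Gdelta (g : ℝ → ℝ) (δ x : ℝ) : ℝ :=
  (1 / (1 + δ)) * (1 + δ * ∫ t in (1:ℝ)..x, 1 / g t)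

/-- `h_δ(x) = ∫₁^x (1 − G_δ(y))/G_δ(y) dy`. -/
noncomputable def hdelta (g : ℝ → ℝ) (δ x : ℝ) : ℝ :=
  ∫ y in (1:ℝ)..x, (1 - Gdelta g δ y) / Gdelta g δ y

/-!
Since `(1 - G) / G = G⁻¹ - 1`, we have `x + h_δ(x) = 1 + ∫₁^x G_δ(y)⁻¹ dy`. For the exponential `g`,
put `F(x) = (1 + δ) e^{s(x-1)} - δ`; then `G_δ⁻¹ = s⁻¹ F' / F` and `F(1) = 1`, so
`(x + h_δ(x)) / g(x) = (1 + δ) (s + log F(x)) / (F(x) + δ)`. With `t = s / (1 + δ)`, the inequality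
`t + log y ≤ y e^{t-1}` at `y = F(x)`, added to `δ` times its instance `y = 1`, gives
`s + log F(x) ≤ (F(x) + δ) e^{t-1}`.
-/

open Real

theorem integral_mul_exp_neg_mul_sub (s a b : ℝ) :
    ∫ t in a..b, s * exp (-(s * (t - a))) = 1 - exp (-(s * (b - a))) := by
  have hderiv (t : ℝ) :
      HasDerivAt (fun t ↦ -exp (-(s * (t - a)))) (s * exp (-(s * (t - a)))) t :=
    (((hasDerivAt_id t).sub_const a).const_mul s).neg.exp.neg.congr_deriv (by simp [mul_comm])
  have hint : IntervalIntegrable (fun t ↦ s * exp (-(s * (t - a)))) volume a b :=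
    Continuous.intervalIntegrable (by fun_prop) a b
  rw [intervalIntegral.integral_eq_sub_of_hasDerivAt (fun t _ ↦ hderiv t) hint, sub_self, mul_zero,
    neg_zero, exp_zero]
  ring

theorem integral_deriv_div_eq_log_sub_log {f f' : ℝ → ℝ} {a b : ℝ}
    (hf : ∀ x ∈ uIcc a b, HasDerivAt f (f' x) x) (hf0 : ∀ x ∈ uIcc a b, f x ≠ 0)
    (hf' : IntervalIntegrable f' volume a b) :
    ∫ x in a..b, f' x / f x = log (f b) - log (f a) := by
  have hfc : ContinuousOn f (uIcc a b) := fun x hx ↦ (hf x hx).continuousAt.continuousWithinAt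
  have hint : IntervalIntegrable (fun x ↦ f' x / f x) volume a b := by
    simp only [div_eq_mul_inv]
    exact hf'.mul_continuousOn (hfc.inv₀ hf0)
  exact intervalIntegral.integral_eq_sub_of_hasDerivAt (fun x hx ↦ (hf x hx).log (hf0 x hx)) hint

theorem add_log_le_mul_exp_sub_one (t : ℝ) {y : ℝ} (hy : 0 < y) :
    t + log y ≤ y * exp (t - 1) := by
  have h := log_le_sub_one_of_pos (mul_pos hy (exp_pos (t - 1)))
  rw [log_mul hy.ne' (exp_pos _).ne', log_exp] at h
  linarith

theorem add_log_le_add_mul_exp_neg_div {δ y : ℝ} (s : ℝ) (hδ : 0 ≤ δ) (hy : 0 < y) :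
    s + log y ≤ (y + δ) * exp (-((1 + δ - s) / (1 + δ))) := by
  obtain ⟨t, rfl⟩ : ∃ t, s = (1 + δ) * t := ⟨s / (1 + δ), by field_simp⟩
  have hexponent : -((1 + δ - (1 + δ) * t) / (1 + δ)) = t - 1 := by
    field_simp
    ring
  have ht : t ≤ exp (t - 1) := by simpa using add_log_le_mul_exp_sub_one t one_pos
  rw [hexponent]
  calc (1 + δ) * t + log y = (t + log y) + δ * t := by ring
    _ ≤ y * exp (t - 1) + δ * exp (t - 1) := by
        gcongr
        exact add_log_le_mul_exp_sub_one t hy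
    _ = (y + δ) * exp (t - 1) := by ring

theorem one_add_mul_exp_sub_pos {δ t : ℝ} (hδ : 0 ≤ δ) (ht : 0 ≤ t) :
    0 < (1 + δ) * exp t - δ := by
  have h : 1 + δ ≤ (1 + δ) * exp t := le_mul_of_one_le_right (by positivity) (one_le_exp ht)
  linarith

theorem one_add_mul_exp_neg_div_le_iff {s δ : ℝ} (hδ : 0 < 1 + δ) :
    (1 + δ) * exp (-((1 + δ - s) / (1 + δ))) ≤ 1 + δ ↔ s ≤ 1 + δ := by
  rw [mul_le_iff_le_one_right hδ, exp_le_one_iff, neg_nonpos, le_div_iff₀ hδ, zero_mul, sub_nonneg]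

section NonnegativeWeight

variable {g : ℝ → ℝ} {δ x : ℝ}

theorem Gdelta_pos (hδ : 0 ≤ δ) (hg : ∀ t ∈ Icc 1 x, 0 ≤ g t) (hx : 1 ≤ x) :
    0 < Gdelta g δ x := by
  have hint : 0 ≤ ∫ t in (1 : ℝ)..x, 1 / g t :=
    intervalIntegral.integral_nonneg hx fun t ht ↦ one_div_nonneg.2 (hg t ht)
  rw [Gdelta]
  positivity

theorem continuousOn_Gdelta (δ : ℝ) (hint : IntervalIntegrable (fun t ↦ 1 / g t) volume 1 x) :
    ContinuousOn (Gdelta g δ) (uIcc 1 x) := by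
  have hprim := intervalIntegral.continuousOn_primitive_interval' hint left_mem_uIcc
  exact continuousOn_const.mul (continuousOn_const.add (continuousOn_const.mul hprim))

theorem add_hdelta_eq_one_add_integral_inv (hδ : 0 ≤ δ) (hg : ∀ t ∈ Icc 1 x, 0 ≤ g t)
    (hint : IntervalIntegrable (fun t ↦ 1 / g t) volume 1 x) (hx : 1 ≤ x) :
    x + hdelta g δ x = 1 + ∫ y in (1 : ℝ)..x, (Gdelta g δ y)⁻¹ := by
  have hG : ∀ y ∈ uIcc 1 x, Gdelta g δ y ≠ 0 := fun y hy ↦ by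
    rw [uIcc_of_le hx] at hy
    exact (Gdelta_pos hδ (fun t ht ↦ hg t ⟨ht.1, ht.2.trans hy.2⟩) hy.1).ne'
  have hcongr : EqOn (fun y ↦ (1 - Gdelta g δ y) / Gdelta g δ y) (fun y ↦ (Gdelta g δ y)⁻¹ - 1)
      (uIcc 1 x) := fun y hy ↦ by
    simp only [sub_div, one_div, div_self (hG y hy)]
  have hinv : IntervalIntegrable (fun y ↦ (Gdelta g δ y)⁻¹) volume 1 x :=
    ((continuousOn_Gdelta δ hint).inv₀ hG).intervalIntegrable
  rw [hdelta, intervalIntegral.integral_congr hcongr,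
    intervalIntegral.integral_sub hinv intervalIntegrable_const, integral_one]
  ring

end NonnegativeWeight

section Exponential

variable {s δ x : ℝ} {g : ℝ → ℝ}

theorem eqOn_one_div_of_exponential (hg : ∀ x, 1 ≤ x → g x = s⁻¹ * exp (s * (x - 1)))
    (hx : 1 ≤ x) :
    EqOn (fun t ↦ 1 / g t) (fun t ↦ s * exp (-(s * (t - 1)))) (uIcc 1 x) := fun t ht ↦ by
  rw [uIcc_of_le hx] at ht
  simp only [hg t ht.1, one_div, mul_inv, inv_inv, exp_neg]

theorem inv_Gdelta_of_exponential (hδ : 1 + δ ≠ 0)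
    (hg : ∀ x, 1 ≤ x → g x = s⁻¹ * exp (s * (x - 1))) (hx : 1 ≤ x) :
    (Gdelta g δ x)⁻¹ =
      (1 + δ) * exp (s * (x - 1)) / ((1 + δ) * exp (s * (x - 1)) - δ) := by
  rw [Gdelta, intervalIntegral.integral_congr (eqOn_one_div_of_exponential hg hx),
    integral_mul_exp_neg_mul_sub, exp_neg, ← inv_div]
  field_simp
  ring

theorem integral_inv_Gdelta_of_exponential (hs : 0 < s) (hδ : 0 ≤ δ)
    (hg : ∀ x, 1 ≤ x → g x = s⁻¹ * exp (s * (x - 1))) (hx : 1 ≤ x) :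
    ∫ y in (1 : ℝ)..x, (Gdelta g δ y)⁻¹ = s⁻¹ * log ((1 + δ) * exp (s * (x - 1)) - δ) := by
  let F (y : ℝ) : ℝ := (1 + δ) * exp (s * (y - 1)) - δ
  let F' (y : ℝ) : ℝ := (1 + δ) * (exp (s * (y - 1)) * s)
  have hF (y : ℝ) : HasDerivAt F (F' y) y :=
    (((((hasDerivAt_id y).sub_const 1).const_mul s).exp.const_mul (1 + δ)).sub_const δ).congr_deriv
      (by simp only [F', id_eq, mul_one])
  have one_le_of_mem {y : ℝ} (hy : y ∈ uIcc 1 x) : 1 ≤ y :=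
    (uIcc_of_le hx ▸ hy : y ∈ Icc 1 x).1
  have hF0 : ∀ y ∈ uIcc 1 x, F y ≠ 0 := fun y hy ↦
    (one_add_mul_exp_sub_pos hδ (mul_nonneg hs.le (sub_nonneg.2 (one_le_of_mem hy)))).ne'
  have hF'c : Continuous F' := by fun_prop
  have hGinv : EqOn (fun y ↦ (Gdelta g δ y)⁻¹) (fun y ↦ s⁻¹ * (F' y / F y)) (uIcc 1 x) := by
    intro y hy
    beta_reduce
    rw [inv_Gdelta_of_exponential (by positivity) hg (one_le_of_mem hy)]
    simp only [F', F]
    field_simp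
  rw [intervalIntegral.integral_congr hGinv, intervalIntegral.integral_const_mul,
    integral_deriv_div_eq_log_sub_log (fun y _ ↦ hF y) hF0 (hF'c.intervalIntegrable 1 x)]
  simp [F]

theorem add_hdelta_of_exponential (hs : 0 < s) (hδ : 0 ≤ δ)
    (hg : ∀ x, 1 ≤ x → g x = s⁻¹ * exp (s * (x - 1))) (hx : 1 ≤ x) :
    x + hdelta g δ x = 1 + s⁻¹ * log ((1 + δ) * exp (s * (x - 1)) - δ) := by
  have hg0 : ∀ t ∈ Icc 1 x, 0 ≤ g t := fun t ht ↦ by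
    rw [hg t ht.1]
    positivity
  have hint : IntervalIntegrable (fun t ↦ 1 / g t) volume 1 x :=
    (Continuous.continuousOn (by fun_prop)).congr
      (eqOn_one_div_of_exponential hg hx) |>.intervalIntegrable
  rw [add_hdelta_eq_one_add_integral_inv hδ hg0 hint hx,
    integral_inv_Gdelta_of_exponential hs hδ hg hx]

theorem stmt_11_general (hs : 0 < s) (hδ : 0 ≤ δ)
    (hg : ∀ x, 1 ≤ x → g x = s⁻¹ * exp (s * (x - 1))) :
    (∀ x, 1 ≤ x → (x + hdelta g δ x) / g x ≤ (1 + δ) * exp (-((1 + δ - s) / (1 + δ)))) ∧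
      ((1 + δ) * exp (-((1 + δ - s) / (1 + δ))) ≤ 1 + δ ↔ s ≤ 1 + δ) := by
  refine ⟨fun x hx ↦ ?_, one_add_mul_exp_neg_div_le_iff (by positivity)⟩
  set y := (1 + δ) * exp (s * (x - 1)) - δ with hy
  have hy0 : 0 < y := one_add_mul_exp_sub_pos hδ (mul_nonneg hs.le (sub_nonneg.2 hx))
  rw [add_hdelta_of_exponential hs hδ hg hx, hg x hx, div_le_iff₀ (by positivity)]
  calc 1 + s⁻¹ * log y = s⁻¹ * (s + log y) := by field_simp
    _ ≤ s⁻¹ * ((y + δ) * exp (-((1 + δ - s) / (1 + δ)))) := by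
        gcongr
        exact add_log_le_add_mul_exp_neg_div s hδ hy0
    _ = (1 + δ) * exp (-((1 + δ - s) / (1 + δ))) * (s⁻¹ * exp (s * (x - 1))) := by
        rw [hy]
        ring

end Exponential

theorem stmt_11 (s : ℝ) (hs0 : 0 < s) (hs1 : s ≤ 1) (δ : ℝ) (hδ : 0 < δ)
    (g : ℝ → ℝ) (hg : ∀ x, g x = s⁻¹ * Real.exp (s * (x - 1))) :
    (⨆ x : Set.Ici (1:ℝ), ((x : ℝ) + hdelta g δ x) / g x) ≤
        (1 + δ) * Real.exp (-((1 + δ - s) / (1 + δ))) ∧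
    (1 + δ) * Real.exp (-((1 + δ - s) / (1 + δ))) ≤ 1 + δ :=
  have ⟨hle, hiff⟩ := stmt_11_general hs0 hδ.le fun x _ ↦ hg x
  ⟨ciSup_le fun x ↦ hle x x.2, hiff.2 (by linarith)⟩
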